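/- arXiv:2002.12267 — 9 statements merged into one kernel-verified Lean document; each statement's English description precedes it below -/
import Mathlib

section
/- Let X be a complete lattice and O : X × X → X a quasi-overlap function. Then the function I_O(x,y) = sup{t ∈ X | O(x,t) ≤ y} is well defined, non-decreasing in its second variable, non-increasing (antitone) in its first variable, and satisfies I_O(0,0) = I_O(0,1) = I_O(1,1) = 1 and I_O(1,0) = 0. -/
open Set

/-- A quasi-overlap function on a bounded lattice `X`:
(OL1) commutative; (OL2) `O x y = ⊥` iff `x = ⊥` or `y = ⊥`;
(OL3) `O x y = ⊤` iff `x = ⊤` and `y = ⊤`; (OL4) non-decreasing in each variable. -/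
structure IsQuasiOverlap {X : Type*} [Lattice X] [BoundedOrder X] (O : X → X → X) : Prop where
  comm : ∀ x y, O x y = O y x
  bot_iff : ∀ x y, O x y = ⊥ ↔ x = ⊥ ∨ y = ⊥
  top_iff : ∀ x y, O x y = ⊤ ↔ x = ⊤ ∧ y = ⊤
  mono_left : ∀ ⦃x₁ x₂⦄ (y : X), x₁ ≤ x₂ → O x₁ y ≤ O x₂ y
  mono_right : ∀ (x : X) ⦃y₁ y₂⦄, y₁ ≤ y₂ → O x y₁ ≤ O x y₂

/-- The implication induced by a quasi-overlap `O` on a complete lattice: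
`I_O x y = sup {t | O x t ≤ y}`. -/
def oImpl {X : Type*} [CompleteLattice X] (O : X → X → X) (x y : X) : X :=
  sSup {t | O x t ≤ y}

theorem oImpl_basic_properties {X : Type*} [CompleteLattice X]
    (O : X → X → X) (hO : IsQuasiOverlap O) :
    (∀ x : X, Monotone (fun y => oImpl O x y)) ∧
    (∀ y : X, Antitone (fun x => oImpl O x y)) ∧
    oImpl O (⊥ : X) ⊥ = ⊤ ∧ oImpl O (⊥ : X) ⊤ = ⊤ ∧
    oImpl O (⊤ : X) ⊤ = ⊤ ∧ oImpl O (⊤ : X) ⊥ = ⊥ := by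
  refine ⟨fun x a b hab => sSup_le_sSup fun t ht => le_trans ht hab,
    fun y a b hab => sSup_le_sSup fun t ht => le_trans (hO.mono_left t hab) ht, ?_, ?_, ?_, ?_⟩
  · exact top_le_iff.mp (le_sSup (((hO.bot_iff _ _).2 (Or.inl rfl)).le))
  · exact top_le_iff.mp (le_sSup (le_top : O ⊥ ⊤ ≤ ⊤))
  · exact top_le_iff.mp (le_sSup (le_top : O ⊤ ⊤ ≤ ⊤))
  · refine le_bot_iff.mp (sSup_le fun t ht => ?_)
    rcases (hO.bot_iff _ _).1 (le_bot_iff.mp ht) with h | h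
    · exact le_of_le_of_eq le_top h
    · exact h.le
end

section
/- Let X be a complete lattice and O : X × X → X a quasi-overlap function such that I_O(x,y) = max{t ∈ X | O(x,t) ≤ y} for all x,y ∈ X (i.e., O(x, I_O(x,y)) ≤ y). Then for every x ∈ X the section t ↦ O(x,t) preserves suprema of directed sets; in particular O(x, sup_{j∈J} z_j) = sup_{j∈J} O(x, z_j) for every non-decreasing net (z_j)_{j∈J} in X. -/
open Set

theorem quasiOverlap_scottContinuous_of_max {X : Type*} [CompleteLattice X]
    (O : X → X → X) (hO : IsQuasiOverlap O)
    (hmax : ∀ x y : X, O x (oImpl O x y) ≤ y) :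
    (∀ x : X, ∀ D : Set X, D.Nonempty → DirectedOn (· ≤ ·) D →
        O x (sSup D) = sSup ((fun t => O x t) '' D)) ∧
    (∀ x : X, ∀ {J : Type} [SemilatticeSup J] [Nonempty J] (z : J → X), Monotone z →
        O x (⨆ j, z j) = ⨆ j, O x (z j)) := by
  have key : ∀ x : X, ∀ D : Set X, O x (sSup D) = sSup ((fun t => O x t) '' D) := by
    intro x D
    apply le_antisymm
    · refine le_trans (hO.mono_right x ?_) (hmax x _)
      apply sSup_le_sSup
      intro t ht
      exact le_sSup (Set.mem_image_of_mem (fun t => O x t) ht)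
    · apply sSup_le
      rintro _ ⟨t, ht, rfl⟩
      exact hO.mono_right x (le_sSup ht)
  refine ⟨fun x D _ _ => key x D, ?_⟩
  intro x J _ _ z _
  have h := key x (Set.range z)
  rw [← Set.range_comp] at h
  exact h
end

section
/- Let X be a complete lattice that is densely ordered and O : X × X → X a residuated quasi-overlap function (i.e., the pair (O, I_O) satisfies the residuation principle). Then I_O satisfies the neutrality property (NP): I_O(1,y) = y for all y ∈ X, if and only if 1 is a neutral element of O: O(1,y) = y for all y ∈ X. -/
open Set

theorem oImpl_neutrality_iff {X : Type*} [CompleteLattice X] [DenselyOrdered X]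
    (O : X → X → X) (hO : IsQuasiOverlap O)
    (hres : ∀ x y z : X, O x z ≤ y ↔ z ≤ oImpl O x y) :
    (∀ y : X, oImpl O ⊤ y = y) ↔ (∀ y : X, O ⊤ y = y) := by
  constructor
  · intro h y
    apply le_antisymm
    · rw [hres, h]
    · have h1 := (hres ⊤ (O ⊤ y) y).1 le_rfl
      rwa [h] at h1
  · intro h y
    apply le_antisymm
    · have h1 := (hres ⊤ y (oImpl O ⊤ y)).2 le_rfl
      rwa [h] at h1
    · rw [← hres, h]
end

section
/- Let X be a complete lattice that is densely ordered and O : X × X → X a residuated quasi-overlap function (i.e., the pair (O, I_O) satisfies the residuation principle). Then I_O satisfies the ordering property (OP): for all x,y ∈ X, x ≤ y ⇔ I_O(x,y) = 1, if and only if O has neutral element 1: O(x,1) = x for all x ∈ X. -/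
open Set

theorem oImpl_ordering_iff_neutral {X : Type*} [CompleteLattice X] [DenselyOrdered X]
    (O : X → X → X) (hO : IsQuasiOverlap O)
    (hres : ∀ x y z : X, O x z ≤ y ↔ z ≤ oImpl O x y) :
    (∀ x y : X, x ≤ y ↔ oImpl O x y = ⊤) ↔ (∀ x : X, O x ⊤ = x) := by
  have key : ∀ x y : X, oImpl O x y = ⊤ ↔ O x ⊤ ≤ y := by
    intro x y
    rw [hres x y ⊤, top_le_iff]
  constructor
  · intro h x
    apply le_antisymm
    · exact (key x x).1 ((h x x).1 le_rfl)
    · exact (h x (O x ⊤)).2 ((key x (O x ⊤)).2 le_rfl)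
  · intro h x y
    rw [key, h]
end

section
/- Let X be a complete lattice that is densely ordered and O : X × X → X a residuated quasi-overlap function (i.e., the pair (O, I_O) satisfies the residuation principle). If I_O satisfies the exchange principle (EP): I_O(x, I_O(y,z)) = I_O(y, I_O(x,z)) for all x,y,z ∈ X, and for all x,y,z ∈ X the elements O(x, O(y,z)) and O(y, O(x,z)) are comparable, then O is associative. -/
open Set

theorem quasiOverlap_assoc_of_exchange {X : Type*} [CompleteLattice X] [DenselyOrdered X]
    (O : X → X → X) (hO : IsQuasiOverlap O)
    (hres : ∀ x y z : X, O x z ≤ y ↔ z ≤ oImpl O x y)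
    (hEP : ∀ x y z : X, oImpl O x (oImpl O y z) = oImpl O y (oImpl O x z))
    (hcomp : ∀ x y z : X, O x (O y z) ≤ O y (O x z) ∨ O y (O x z) ≤ O x (O y z)) :
    ∀ x y z : X, O (O x y) z = O x (O y z) := by
  have key : ∀ x y t : X, O y (O x t) = O x (O y t) := by
    intro x y t
    apply eq_of_forall_ge_iff
    intro c
    rw [hres, hres, hres x c, hres y, hEP]
  intro x y z
  rw [hO.comm (O x y) z, key x z y, hO.comm z y]
end

section
/- Let X be a complete lattice that is densely ordered and O : X × X → X a residuated quasi-overlap function (i.e., the pair (O, I_O) satisfies the residuation principle). If O is associative, then I_O satisfies the exchange principle (EP): I_O(x, I_O(y,z)) = I_O(y, I_O(x,z)) for all x,y,z ∈ X. -/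
open Set

theorem oImpl_exchange_of_assoc {X : Type*} [CompleteLattice X] [DenselyOrdered X]
    (O : X → X → X) (hO : IsQuasiOverlap O)
    (hres : ∀ x y z : X, O x z ≤ y ↔ z ≤ oImpl O x y)
    (hassoc : ∀ x y z : X, O (O x y) z = O x (O y z)) :
    ∀ x y z : X, oImpl O x (oImpl O y z) = oImpl O y (oImpl O x z) := by
  intro x y z
  refine eq_of_forall_le_iff fun t => ?_
  rw [← hres, ← hres, ← hres, ← hres, ← hassoc, ← hassoc, hO.comm x y]
end

section
/- Let X be a complete lattice, O : X × X → X a quasi-overlap function, and ρ : X → X an order automorphism (a bijection with x ≤ y ⇔ ρ(x) ≤ ρ(y)). Then the conjugate O^ρ defined by O^ρ(x,y) = ρ⁻¹(O(ρ(x), ρ(y))) is also a quasi-overlap function. Moreover, if for every x the section t ↦ O(x,t) preserves suprema of directed sets, then for every x the section t ↦ O^ρ(x,t) preserves suprema of directed sets. -/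
open Set

/-- The conjugate of `O` by an order automorphism `ρ`: `O^ρ x y = ρ⁻¹ (O (ρ x) (ρ y))`. -/
def oConj {X : Type*} [CompleteLattice X] (O : X → X → X) (ρ : X ≃o X) (x y : X) : X :=
  ρ.symm (O (ρ x) (ρ y))

theorem oConj_isQuasiOverlap {X : Type*} [CompleteLattice X]
    (O : X → X → X) (hO : IsQuasiOverlap O) (ρ : X ≃o X) :
    IsQuasiOverlap (oConj O ρ) ∧
    ((∀ x : X, ∀ D : Set X, D.Nonempty → DirectedOn (· ≤ ·) D →
        O x (sSup D) = sSup ((fun t => O x t) '' D)) →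
      ∀ x : X, ∀ D : Set X, D.Nonempty → DirectedOn (· ≤ ·) D →
        oConj O ρ x (sSup D) = sSup ((fun t => oConj O ρ x t) '' D)) := by
  refine ⟨⟨?_, ?_, ?_, ?_, ?_⟩, ?_⟩
  · intro x y
    simp only [oConj, hO.comm (ρ x) (ρ y)]
  · intro x y
    simp only [oConj, map_eq_bot_iff, hO.bot_iff]
  · intro x y
    simp only [oConj, map_eq_top_iff, hO.top_iff]
  · intro x₁ x₂ y h
    exact ρ.symm.monotone (hO.mono_left _ (ρ.monotone h))
  · intro x y₁ y₂ h
    exact ρ.symm.monotone (hO.mono_right _ (ρ.monotone h))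
  · intro H x D hne hD
    have hdir : DirectedOn (· ≤ ·) (ρ '' D) := by
      rintro _ ⟨a, ha, rfl⟩ _ ⟨b, hb, rfl⟩
      obtain ⟨c, hc, hac, hbc⟩ := hD a ha b hb
      exact ⟨ρ c, ⟨c, hc, rfl⟩, ρ.monotone hac, ρ.monotone hbc⟩
    have key := H (ρ x) (ρ '' D) (hne.image _) hdir
    have h1 : ρ (sSup D) = sSup (ρ '' D) := by
      rw [ρ.map_sSup, sSup_image]
    simp only [oConj]
    rw [h1, key, ρ.symm.map_sSup, sSup_image, iSup_image, iSup_image]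
end

section
/- Let X be a complete lattice, O : X × X → X a quasi-overlap function, and ρ : X → X an order automorphism. Then the conjugate of the induced implication coincides with the implication induced by the conjugate: for all x,y ∈ X, ρ⁻¹(I_O(ρ(x), ρ(y))) = I_{O^ρ}(x,y), where O^ρ(x,y) = ρ⁻¹(O(ρ(x), ρ(y))) and I_{O^ρ}(x,y) = sup{z ∈ X | O^ρ(x,z) ≤ y}. -/
open Set

theorem oImpl_conj_eq_conj_oImpl {X : Type*} [CompleteLattice X]
    (O : X → X → X) (hO : IsQuasiOverlap O) (ρ : X ≃o X) :
    ∀ x y : X, ρ.symm (oImpl O (ρ x) (ρ y)) = oImpl (oConj O ρ) x y := by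
  intro x y
  unfold oImpl oConj
  apply le_antisymm
  · rw [OrderIso.symm_apply_le]
    refine sSup_le fun t ht => ?_
    rw [← OrderIso.symm_apply_le]
    refine le_sSup ?_
    simp only [Set.mem_setOf_eq, OrderIso.symm_apply_le, OrderIso.apply_symm_apply]
    exact ht
  · refine sSup_le fun t ht => ?_
    rw [OrderIso.le_symm_apply]
    refine le_sSup ?_
    simpa only [Set.mem_setOf_eq, OrderIso.symm_apply_le] using ht
end

section
/- Let X be a complete lattice that is densely ordered and O : X × X → X a residuated quasi-overlap function (the pair (O, I_O) satisfies the residuation principle). For each z ∈ X, the map c_z : X → X defined by c_z(x) = I_O(I_O(x,z), z) is a closure operator on X: it is monotone (x ≤ y implies c_z(x) ≤ c_z(y)), inflationary (x ≤ c_z(x) for all x), and idempotent (c_z(c_z(x)) = c_z(x) for all x). -/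
open Set

theorem oImpl_double_is_closure {X : Type*} [CompleteLattice X] [DenselyOrdered X]
    (O : X → X → X) (hO : IsQuasiOverlap O)
    (hres : ∀ x y z : X, O x z ≤ y ↔ z ≤ oImpl O x y) :
    ∀ z : X,
      Monotone (fun x => oImpl O (oImpl O x z) z) ∧
      (∀ x : X, x ≤ oImpl O (oImpl O x z) z) ∧
      (∀ x : X, oImpl O (oImpl O (oImpl O (oImpl O x z) z) z) z
          = oImpl O (oImpl O x z) z) := by
  intro z
  have anti : ∀ a b : X, a ≤ b → oImpl O b z ≤ oImpl O a z := fun a b h =>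
    (hres a z _).1 (le_trans (hO.mono_left _ h) ((hres b z _).2 le_rfl))
  have infl : ∀ x : X, x ≤ oImpl O (oImpl O x z) z := fun x =>
    (hres _ z x).1 (by rw [hO.comm]; exact (hres x z _).2 le_rfl)
  refine ⟨fun a b h => anti _ _ (anti _ _ h), infl, fun x => ?_⟩
  exact le_antisymm (anti _ _ (infl _)) (infl _)
end
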